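/- For all σ-structures A and B and every k ∈ ℕ, the following are equivalent: (i) A and B satisfy the same sentences of ⁺FO_k; (ii) there exist objects Z, Z′ of EM(E_k^I) together with morphisms p : Z → F_k^I(A), q : Z → F_k^I(B), p′ : Z′ → F_k^I(B), q′ : Z′ → F_k^I(A) such that p and p′ are open pathwise embeddings and q and q′ are each a composition of a bijection followed by an open pathwise embedding. -/

import Mathlib

/-- A relational vocabulary: a type of relation symbols together with their arities. -/
structure Vocab : Type 1 where
  Rel : Type
  ar : Rel → ℕ

/-- A structure for the relational vocabulary `V` with carrier `α`. -/
structure Str (V : Vocab) (α : Type) : Type where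
  rel : ∀ r : V.Rel, (Fin (V.ar r) → α) → Prop
/-- Positive first-order formulas over `V` with free variables among `Fin n`
(de Bruijn style): no negation symbol, both quantifiers allowed. -/
inductive PFml (V : Vocab) : ℕ → Type
  | rel {n : ℕ} (r : V.Rel) (v : Fin (V.ar r) → Fin n) : PFml V n
  | eq {n : ℕ} (i j : Fin n) : PFml V n
  | and {n : ℕ} (φ ψ : PFml V n) : PFml V n
  | or {n : ℕ} (φ ψ : PFml V n) : PFml V n
  | ex {n : ℕ} (φ : PFml V (n + 1)) : PFml V n
  | all {n : ℕ} (φ : PFml V (n + 1)) : PFml V n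

namespace PFml

/-- Quantifier rank. -/
def qr {V : Vocab} : ∀ {n : ℕ}, PFml V n → ℕ
  | _, .rel _ _ => 0
  | _, .eq _ _ => 0
  | _, .and φ ψ => max (qr φ) (qr ψ)
  | _, .or φ ψ => max (qr φ) (qr ψ)
  | _, .ex φ => qr φ + 1
  | _, .all φ => qr φ + 1

/-- Satisfaction in a structure, relative to an environment. -/
def Sat {V : Vocab} {α : Type} (M : Str V α) : ∀ {n : ℕ}, PFml V n → (Fin n → α) → Prop
  | _, .rel r v, e => M.rel r fun i => e (v i)
  | _, .eq i j, e => e i = e j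
  | _, .and φ ψ, e => Sat M φ e ∧ Sat M ψ e
  | _, .or φ ψ, e => Sat M φ e ∨ Sat M ψ e
  | _, .ex φ, e => ∃ a : α, Sat M φ (Fin.snoc e a)
  | _, .all φ, e => ∀ a : α, Sat M φ (Fin.snoc e a)

end PFml
/-- An object datum for the Eilenberg–Moore category `EM(E_k^I)` of the
Ehrenfeucht–Fraïssé comonad over `σ^I = σ ∪ {I}`: a `σ`-structure together with an
interpretation `ieq` of the fresh binary relation symbol `I` and a (forest) order. -/
structure EObj (V : Vocab) : Type 1 where
  carrier : Type
  rel : ∀ r : V.Rel, (Fin (V.ar r) → carrier) → Prop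
  ieq : carrier → carrier → Prop
  le : carrier → carrier → Prop

namespace EObj

variable {V : Vocab}

/-- Gaifman adjacency, with respect to all relations of `σ ∪ {I}`. -/
def Adj (X : EObj V) (x y : X.carrier) : Prop :=
  x ≠ y ∧ ((∃ r v, X.rel r v ∧ (∃ i, v i = x) ∧ (∃ j, v j = y)) ∨ X.ieq x y ∨ X.ieq y x)

/-- The covering relation of the order of `X`. -/
def Cover (X : EObj V) (x y : X.carrier) : Prop :=
  X.le x y ∧ x ≠ y ∧ ∀ z, X.le x z → X.le z y → z = x ∨ z = y

/-- Roots, i.e. minimal elements of the forest order. -/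
def IsRoot (X : EObj V) (x : X.carrier) : Prop := ∀ y, X.le y x → y = x

/-- `X` is (the datum of) a coalgebra for `E_k^I`: a forest-ordered `σ^I`-structure of
height at most `k` in which Gaifman-adjacent elements are comparable. -/
def IsCoalg (k : ℕ) (X : EObj V) : Prop :=
  (∀ x, X.le x x) ∧ (∀ x y z, X.le x y → X.le y z → X.le x z) ∧
  (∀ x y, X.le x y → X.le y x → x = y) ∧
  (∀ x : X.carrier, {y | X.le y x}.Finite ∧ {y | X.le y x}.ncard ≤ k + 1 ∧
    ∀ y z, X.le y x → X.le z x → X.le y z ∨ X.le z y) ∧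
  (∀ x y, X.Adj x y → X.le x y ∨ X.le y x)

/-- Morphisms of `EM(E_k^I)`: homomorphisms of `σ^I`-structures that are also forest
morphisms (they send roots to roots and preserve the covering relation). -/
def IsHom (X Y : EObj V) (f : X.carrier → Y.carrier) : Prop :=
  (∀ r v, X.rel r v → Y.rel r fun i => f (v i)) ∧
  (∀ x y, X.ieq x y → Y.ieq (f x) (f y)) ∧
  (∀ x, X.IsRoot x → Y.IsRoot (f x)) ∧
  (∀ x y, X.Cover x y → Y.Cover (f x) (f y))

/-- Embeddings: morphisms that are injective and reflect all relations. -/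
def IsEmb (X Y : EObj V) (f : X.carrier → Y.carrier) : Prop :=
  IsHom X Y f ∧ Function.Injective f ∧
  (∀ r v, (Y.rel r fun i => f (v i)) → X.rel r v) ∧
  (∀ x y, Y.ieq (f x) (f y) → X.ieq x y)

/-- Paths: objects whose forest order is finite and linear. -/
def IsPath (X : EObj V) : Prop :=
  Finite X.carrier ∧ ∀ x y : X.carrier, X.le x y ∨ X.le y x

/-- Pathwise embeddings: morphisms `f : X → Y` such that for every path embedding
`m : P ↪ X` the composite `f ∘ m` is a path embedding. -/
def IsPWEmb (k : ℕ) (X Y : EObj V) (f : X.carrier → Y.carrier) : Prop :=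
  IsHom X Y f ∧ ∀ P : EObj V, IsCoalg k P → IsPath P →
    ∀ m : P.carrier → X.carrier, IsEmb P X m → IsEmb P Y fun p => f (m p)

/-- Open morphisms: every commutative square of path embeddings over `f` admits a
diagonal filler. -/
def IsOpen (k : ℕ) (X Y : EObj V) (f : X.carrier → Y.carrier) : Prop :=
  ∀ P Q : EObj V, IsCoalg k P → IsPath P → IsCoalg k Q → IsPath Q →
    ∀ (i : P.carrier → Q.carrier) (m : P.carrier → X.carrier)
      (n : Q.carrier → Y.carrier),
      IsEmb P Q i → IsEmb P X m → IsEmb Q Y n → (∀ x, n (i x) = f (m x)) →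
      ∃ d : Q.carrier → X.carrier, IsHom Q X d ∧ (∀ x, d (i x) = m x) ∧ ∀ q, f (d q) = n q

end EObj
/-- The co-free coalgebra `F_k^I(A) = (E_k J(A), ⊑)` on `J(A)`: non-empty sequences of
elements of `A` of length at most `k`, ordered by the prefix order.  A tuple of sequences
is related iff the sequences are pairwise comparable and their last elements are related
in `J(A)`; the fresh relation `I` is interpreted as comparability plus equality of last
elements (the diagonal of `J`). -/
def FE (V : Vocab) (k : ℕ) {α : Type} (A : Str V α) : EObj V where
  carrier := {l : List α // l ≠ [] ∧ l.length ≤ k}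
  rel r v :=
    (∀ i j, (v i).1 <+: (v j).1 ∨ (v j).1 <+: (v i).1) ∧
    A.rel r fun i => (v i).1.getLast (v i).2.1
  ieq s t := ((s.1 <+: t.1) ∨ (t.1 <+: s.1)) ∧ s.1.getLast s.2.1 = t.1.getLast t.2.1
  le s t := s.1 <+: t.1
/-- `q : Z → Y` is the composition of a bijection followed by an open pathwise
embedding, in `EM(E_k^I)`. -/
def BijThenOpenE (V : Vocab) (k : ℕ) (Z Y : EObj V) (q : Z.carrier → Y.carrier) : Prop :=
  ∃ W : EObj V, EObj.IsCoalg k W ∧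
    ∃ (u : Z.carrier → W.carrier) (v : W.carrier → Y.carrier),
      EObj.IsHom Z W u ∧ Function.Bijective u ∧
      EObj.IsPWEmb k W Y v ∧ EObj.IsOpen k W Y v ∧ ∀ z, q z = v (u z)

/-!
Between coalgebras, a pathwise embedding is a morphism that reflects the relations on chains, and
it is open exactly when it is surjective and every element above `f x` is the image of an element
above `x`. A span from `F_k^I(A)` to `F_k^I(B)` whose left leg is an open pathwise embedding and
whose right leg is a bijection followed by one is therefore the same thing as a winning strategy
for Duplicator in the `k`-round game in which pairs played must preserve, but need not reflect,
the atomic formulas: the nodes of the apex are the plays, and only the right leg is allowed to add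
relations.

Such a strategy transfers the positive formulas of rank at most `k` from `A` to `B`. Conversely, in
a finite vocabulary there are finitely many positive formulas of bounded rank up to equivalence, so
that Duplicator can answer by realizing the conjunction of the formulas true of an element of `A`,
or by avoiding the disjunction of the formulas false of an element of `B`.
-/

namespace EObj

variable {V : Vocab} {k : ℕ} {X Y Z : EObj V} {f : X.carrier → Y.carrier}

/-! ### Heights and forest morphisms -/

namespace IsCoalg

theorem le_refl (hX : IsCoalg k X) (x : X.carrier) : X.le x x := hX.1 x

theorem le_trans (hX : IsCoalg k X) {x y z : X.carrier} (hxy : X.le x y) (hyz : X.le y z) :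
    X.le x z := hX.2.1 x y z hxy hyz

theorem le_antisymm (hX : IsCoalg k X) {x y : X.carrier} (hxy : X.le x y) (hyx : X.le y x) :
    x = y := hX.2.2.1 x y hxy hyx

theorem finite_setOf_le (hX : IsCoalg k X) (x : X.carrier) : {y | X.le y x}.Finite :=
  (hX.2.2.2.1 x).1

theorem ncard_setOf_le (hX : IsCoalg k X) (x : X.carrier) : {y | X.le y x}.ncard ≤ k + 1 :=
  (hX.2.2.2.1 x).2.1

theorem le_total_of_le (hX : IsCoalg k X) {x y z : X.carrier} (hy : X.le y x) (hz : X.le z x) :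
    X.le y z ∨ X.le z y := (hX.2.2.2.1 x).2.2 y z hy hz

theorem le_total_of_adj (hX : IsCoalg k X) {x y : X.carrier} (h : X.Adj x y) :
    X.le x y ∨ X.le y x := hX.2.2.2.2 x y h

end IsCoalg

/-- The number of elements below `x`, `x` included, so that roots have height `1`. It turns the
conditions on roots and covers in `IsHom` into the preservation of a number. -/
noncomputable def height (X : EObj V) (x : X.carrier) : ℕ := {y | X.le y x}.ncard

namespace IsCoalg

theorem height_lt_height (hX : IsCoalg k X) {x y : X.carrier} (h : X.le x y) (hne : x ≠ y) :
    X.height x < X.height y :=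
  Set.ncard_lt_ncard ⟨fun _ hz => hX.le_trans hz h,
    fun hsub => hne (hX.le_antisymm h (hsub (hX.le_refl y)))⟩ (hX.finite_setOf_le y)

theorem height_le_height (hX : IsCoalg k X) {x y : X.carrier} (h : X.le x y) :
    X.height x ≤ X.height y :=
  Set.ncard_le_ncard (fun _ hz => hX.le_trans hz h) (hX.finite_setOf_le y)

theorem eq_of_height_eq (hX : IsCoalg k X) {x y : X.carrier} (h : X.le x y ∨ X.le y x)
    (hxy : X.height x = X.height y) : x = y := by
  by_contra hne
  rcases h with h | h
  · exact (hX.height_lt_height h hne).ne hxy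
  · exact (hX.height_lt_height h (Ne.symm hne)).ne' hxy

theorem isRoot_iff_height_eq_one (hX : IsCoalg k X) {x : X.carrier} :
    X.IsRoot x ↔ X.height x = 1 := by
  constructor
  · intro hx
    have below_eq : {y | X.le y x} = {x} :=
      Set.Subset.antisymm hx (Set.singleton_subset_iff.2 (hX.le_refl x))
    rw [height, below_eq, Set.ncard_singleton]
  · intro hx y hy
    exact (Set.ncard_le_one (hX.finite_setOf_le x)).1 hx.le y hy x (hX.le_refl x)

theorem le_of_cover (hX : IsCoalg k X) {x y z : X.carrier} (hzy : X.Cover z y) (hxy : X.le x y)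
    (hne : x ≠ y) : X.le x z := by
  rcases hX.le_total_of_le hxy hzy.1 with h | h
  · exact h
  · rcases hzy.2.2 x h hxy with rfl | rfl
    · exact h
    · exact absurd rfl hne

theorem cover_iff_height (hX : IsCoalg k X) {x y : X.carrier} :
    X.Cover x y ↔ X.le x y ∧ X.height y = X.height x + 1 := by
  constructor
  · intro hxy
    have below_eq : {z | X.le z y} = insert y {z | X.le z x} := by
      ext z
      refine ⟨fun hz => or_iff_not_imp_left.2 (hX.le_of_cover hxy hz), ?_⟩
      rintro (rfl | hz)
      exacts [hX.le_refl z, hX.le_trans hz hxy.1]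
    have not_below : y ∉ {z | X.le z x} := fun hyx => hxy.2.1 (hX.le_antisymm hxy.1 hyx)
    exact ⟨hxy.1, by
      rw [height, below_eq, Set.ncard_insert_of_notMem not_below (hX.finite_setOf_le x), height]⟩
  · rintro ⟨hxy, hheight⟩
    refine ⟨hxy, fun h => by simp [h] at hheight, fun z hxz hzy => ?_⟩
    by_contra! hne
    have := hX.height_lt_height hxz hne.1.symm
    have := hX.height_lt_height hzy hne.2
    omega

theorem exists_cover (hX : IsCoalg k X) {y : X.carrier} (hy : ¬ X.IsRoot y) :
    ∃ z, X.Cover z y := by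
  obtain ⟨x, hxy, hne⟩ : ∃ x, X.le x y ∧ x ≠ y := by simpa [IsRoot] using hy
  obtain ⟨z, ⟨hzy, hzne⟩, hmax⟩ := Set.exists_max_image {z | X.le z y ∧ z ≠ y} X.height
    ((hX.finite_setOf_le y).subset fun _ hz => hz.1) ⟨x, hxy, hne⟩
  refine ⟨z, hzy, hzne, fun w hzw hwy => or_iff_not_imp_right.2 fun hwne => ?_⟩
  exact (hX.eq_of_height_eq (.inl hzw)
    ((hX.height_le_height hzw).antisymm (hmax w ⟨hwy, hwne⟩))).symm

theorem root_cover_induction (hX : IsCoalg k X) {motive : X.carrier → Prop}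
    (root : ∀ x, X.IsRoot x → motive x) (cover : ∀ z x, X.Cover z x → motive z → motive x)
    (x : X.carrier) : motive x := by
  induction hn : X.height x using Nat.strong_induction_on generalizing x with
  | _ n ih =>
    by_cases hx : X.IsRoot x
    · exact root x hx
    · obtain ⟨z, hz⟩ := hX.exists_cover hx
      exact cover z x hz (ih _ (hn ▸ hX.height_lt_height hz.1 hz.2.1) z rfl)

end IsCoalg

namespace IsHom

theorem comp {g : Y.carrier → Z.carrier} (hg : IsHom Y Z g) (hf : IsHom X Y f) :
    IsHom X Z fun x => g (f x) :=
  ⟨fun r v h => hg.1 r _ (hf.1 r v h), fun _ _ h => hg.2.1 _ _ (hf.2.1 _ _ h),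
    fun _ h => hg.2.2.1 _ (hf.2.2.1 _ h), fun _ _ h => hg.2.2.2 _ _ (hf.2.2.2 _ _ h)⟩

theorem monotone (hf : IsHom X Y f) (hX : IsCoalg k X) (hY : IsCoalg k Y) {x y : X.carrier}
    (h : X.le x y) : Y.le (f x) (f y) := by
  induction y using hX.root_cover_induction generalizing x with
  | root y hy =>
    rw [hy x h]
    exact hY.le_refl _
  | cover z y hz ih =>
    by_cases hne : x = y
    · rw [hne]
      exact hY.le_refl _
    · exact hY.le_trans (ih (hX.le_of_cover hz h hne)) (hf.2.2.2 _ _ hz).1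

theorem comparable (hf : IsHom X Y f) (hX : IsCoalg k X) (hY : IsCoalg k Y) {x y : X.carrier}
    (h : X.le x y ∨ X.le y x) : Y.le (f x) (f y) ∨ Y.le (f y) (f x) :=
  h.imp (hf.monotone hX hY) (hf.monotone hX hY)

theorem height_eq (hf : IsHom X Y f) (hX : IsCoalg k X) (hY : IsCoalg k Y) (x : X.carrier) :
    Y.height (f x) = X.height x := by
  induction x using hX.root_cover_induction with
  | root x hx =>
    rw [hX.isRoot_iff_height_eq_one.1 hx, hY.isRoot_iff_height_eq_one.1 (hf.2.2.1 x hx)]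
  | cover z x hz ih =>
    rw [(hX.cover_iff_height.1 hz).2, (hY.cover_iff_height.1 (hf.2.2.2 z x hz)).2, ih]

theorem of_height_eq (hX : IsCoalg k X) (hY : IsCoalg k Y)
    (hrel : ∀ r v, X.rel r v → Y.rel r fun i => f (v i))
    (hieq : ∀ x y, X.ieq x y → Y.ieq (f x) (f y)) (hmono : ∀ x y, X.le x y → Y.le (f x) (f y))
    (hheight : ∀ x, Y.height (f x) = X.height x) : IsHom X Y f :=
  ⟨hrel, hieq,
    fun x hx => hY.isRoot_iff_height_eq_one.2
      ((hheight x).trans (hX.isRoot_iff_height_eq_one.1 hx)),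
    fun x y hxy => by
      rw [hX.cover_iff_height] at hxy
      exact hY.cover_iff_height.2 ⟨hmono x y hxy.1, by rw [hheight, hheight, hxy.2]⟩⟩

theorem eq_of_comparable_of_map_eq (hf : IsHom X Y f) (hX : IsCoalg k X) (hY : IsCoalg k Y)
    {x y : X.carrier} (h : X.le x y ∨ X.le y x) (hxy : f x = f y) : x = y :=
  hX.eq_of_height_eq h (by rw [← hf.height_eq hX hY, hxy, hf.height_eq hX hY])

theorem exists_le_of_le_map (hf : IsHom X Y f) (hX : IsCoalg k X) (hY : IsCoalg k Y)
    {x : X.carrier} {y : Y.carrier} (h : Y.le y (f x)) : ∃ x', X.le x' x ∧ f x' = y := by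
  have injOn_below : Set.InjOn f {x' | X.le x' x} := fun a ha b hb =>
    hf.eq_of_comparable_of_map_eq hX hY (hX.le_total_of_le ha hb)
  have image_below : f '' {x' | X.le x' x} = {y' | Y.le y' (f x)} := by
    refine Set.eq_of_subset_of_ncard_le (Set.image_subset_iff.2 fun a ha =>
      hf.monotone hX hY ha) ?_ (hY.finite_setOf_le _)
    rw [injOn_below.ncard_image]
    exact (hf.height_eq hX hY x).le
  exact (Set.ext_iff.1 image_below y).2 h

theorem le_of_map_le_of_injective (hf : IsHom X Y f) (hX : IsCoalg k X) (hY : IsCoalg k Y)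
    (hinj : Function.Injective f) {x y : X.carrier} (h : Y.le (f x) (f y)) : X.le x y := by
  obtain ⟨x', hx', hxx'⟩ := hf.exists_le_of_le_map hX hY h
  exact hinj hxx' ▸ hx'

end IsHom

/-! ### Pathwise embeddings -/

/-- The substructure of `X` induced on `S`, with the restricted order. -/
def induce (X : EObj V) (S : Set X.carrier) : EObj V where
  carrier := S
  rel r v := X.rel r fun i => (v i).1
  ieq x y := X.ieq x.1 y.1
  le x y := X.le x.1 y.1

theorem IsCoalg.induce (hX : IsCoalg k X) (S : Set X.carrier) : IsCoalg k (X.induce S) := by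
  refine ⟨fun x => hX.le_refl x.1, fun _ _ _ => hX.le_trans,
    fun _ _ hxy hyx => Subtype.ext (hX.le_antisymm hxy hyx),
    fun x => ⟨?_, ?_, fun _ _ => hX.le_total_of_le⟩, ?_⟩
  · exact Set.Finite.of_injOn (f := Subtype.val) (fun _ hy => hy)
      Subtype.val_injective.injOn (hX.finite_setOf_le x.1)
  · exact (Set.ncard_le_ncard_of_injOn Subtype.val (fun _ hy => hy)
      Subtype.val_injective.injOn (hX.finite_setOf_le x.1)).trans (hX.ncard_setOf_le x.1)
  · rintro x y ⟨hne, h⟩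
    refine hX.le_total_of_adj ⟨fun hxy => hne (Subtype.ext hxy), h.imp_left ?_⟩
    rintro ⟨r, v, hv, ⟨i, rfl⟩, j, rfl⟩
    exact ⟨r, _, hv, ⟨i, rfl⟩, j, rfl⟩

section Induce

variable {S : Set X.carrier}

theorem isRoot_induce (hS : ∀ x y, X.le x y → y ∈ S → x ∈ S) (x : S) :
    (X.induce S).IsRoot x ↔ X.IsRoot x.1 :=
  ⟨fun h y hy => congrArg Subtype.val (h ⟨y, hS _ _ hy x.2⟩ hy),
    fun h y hy => Subtype.ext (h y.1 hy)⟩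

theorem cover_induce (hS : ∀ x y, X.le x y → y ∈ S → x ∈ S) (x y : S) :
    (X.induce S).Cover x y ↔ X.Cover x.1 y.1 := by
  refine and_congr Iff.rfl (and_congr (not_congr Subtype.ext_iff) ⟨fun h z hxz hzy => ?_,
    fun h z hxz hzy => ?_⟩)
  · exact (h ⟨z, hS _ _ hzy y.2⟩ hxz hzy).imp (congrArg Subtype.val) (congrArg Subtype.val)
  · exact (h z.1 hxz hzy).imp Subtype.ext Subtype.ext

theorem isEmb_val (hS : ∀ x y, X.le x y → y ∈ S → x ∈ S) : IsEmb (X.induce S) X Subtype.val :=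
  ⟨⟨fun _ _ h => h, fun _ _ h => h, fun x h => (isRoot_induce hS x).1 h,
    fun x y h => (cover_induce hS x y).1 h⟩, Subtype.val_injective, fun _ _ h => h, fun _ _ h => h⟩

theorem IsEmb.codRestrict {g : Y.carrier → X.carrier} (hg : IsEmb Y X g)
    (hS : ∀ x y, X.le x y → y ∈ S → x ∈ S) (h : ∀ y, g y ∈ S) :
    IsEmb Y (X.induce S) fun y => ⟨g y, h y⟩ :=
  ⟨⟨hg.1.1, hg.1.2.1, fun x hx => (isRoot_induce hS _).2 (hg.1.2.2.1 x hx),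
    fun x y hxy => (cover_induce hS _ _).2 (hg.1.2.2.2 x y hxy)⟩,
    fun _ _ e => hg.2.1 (congrArg Subtype.val e), hg.2.2.1, hg.2.2.2⟩

end Induce

/-- The down-closure of `T` in the forest order. Those of finite chains are the images of the
path embeddings into `X`. -/
def downset (X : EObj V) (T : Set X.carrier) : Set X.carrier := {x | ∃ t ∈ T, X.le x t}

section Downset

variable {T : Set X.carrier}

theorem IsCoalg.mem_downset (hX : IsCoalg k X) {t : X.carrier} (ht : t ∈ T) :
    t ∈ X.downset T := ⟨t, ht, hX.le_refl t⟩

theorem IsCoalg.mem_downset_of_le (hX : IsCoalg k X) (x y : X.carrier) (hxy : X.le x y) :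
    y ∈ X.downset T → x ∈ X.downset T
  | ⟨t, ht, hyt⟩ => ⟨t, ht, hX.le_trans hxy hyt⟩

theorem IsCoalg.isPath_induce_downset (hX : IsCoalg k X) (hT : T.Finite)
    (hchain : ∀ s ∈ T, ∀ t ∈ T, X.le s t ∨ X.le t s) : IsPath (X.induce (X.downset T)) := by
  refine ⟨?_, ?_⟩
  · have downset_eq : X.downset T = ⋃ t ∈ T, {x | X.le x t} := by ext; simp [downset]
    exact (downset_eq ▸ hT.biUnion fun t _ => hX.finite_setOf_le t : (X.downset T).Finite)
  · rintro ⟨x, s, hs, hxs⟩ ⟨y, t, ht, hyt⟩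
    rcases hchain s hs t ht with hst | hts
    · exact hX.le_total_of_le (hX.le_trans hxs hst) hyt
    · exact hX.le_total_of_le hxs (hX.le_trans hyt hts)

theorem IsPWEmb.isEmb_downset (hf : IsPWEmb k X Y f) (hX : IsCoalg k X) (hT : T.Finite)
    (hchain : ∀ s ∈ T, ∀ t ∈ T, X.le s t ∨ X.le t s) :
    IsEmb (X.induce (X.downset T)) Y fun x => f x.1 :=
  hf.2 _ (hX.induce _) (hX.isPath_induce_downset hT hchain) _ (isEmb_val hX.mem_downset_of_le)

end Downset

theorem isPWEmb_iff_reflects (hX : IsCoalg k X) (hY : IsCoalg k Y) :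
    IsPWEmb k X Y f ↔ IsHom X Y f ∧
      (∀ r v, (∀ i j, X.le (v i) (v j) ∨ X.le (v j) (v i)) → (Y.rel r fun i => f (v i)) →
        X.rel r v) ∧
      ∀ x y, X.le x y ∨ X.le y x → Y.ieq (f x) (f y) → X.ieq x y := by
  constructor
  · refine fun hf => ⟨hf.1, fun r v hv h => ?_, fun x y hxy h => ?_⟩
    · have hemb := hf.isEmb_downset hX (Set.finite_range v)
        (Set.forall_mem_range.2 fun i => Set.forall_mem_range.2 (hv i))
      exact hemb.2.2.1 r (fun i => ⟨v i, hX.mem_downset (Set.mem_range_self i)⟩) h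
    · have hemb := hf.isEmb_downset hX (Set.toFinite {x, y})
        (by simpa [hX.le_refl] using ⟨hxy, hxy.symm⟩)
      exact hemb.2.2.2 ⟨x, hX.mem_downset (by simp)⟩ ⟨y, hX.mem_downset (by simp)⟩ h
  · rintro ⟨hf, hrel, hieq⟩
    refine ⟨hf, fun P hP hpath m hm => ?_⟩
    have hchain : ∀ a b, X.le (m a) (m b) ∨ X.le (m b) (m a) := fun a b =>
      hm.1.comparable hP hX (hpath.2 a b)
    exact ⟨hf.comp hm.1,
      fun a b hab => hm.2.1 (hf.eq_of_comparable_of_map_eq hX hY (hchain a b) hab),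
      fun r v h => hm.2.2.1 r v (hrel r _ (fun _ _ => hchain _ _) h),
      fun a b h => hm.2.2.2 a b (hieq _ _ (hchain a b) h)⟩

/-! ### Open pathwise embeddings -/

theorem IsPath.exists_top {P : EObj V} (hpath : IsPath P) (hP : IsCoalg k P)
    [Nonempty P.carrier] : ∃ t, ∀ x, P.le x t := by
  have := hpath.1
  obtain ⟨t, ht⟩ := Finite.exists_max P.height
  refine ⟨t, fun x => (hpath.2 x t).elim id fun htx => ?_⟩
  rw [hP.eq_of_height_eq (.inl htx) ((hP.height_le_height htx).antisymm (ht x))]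
  exact hP.le_refl x

theorem IsOpen.exists_map_eq_above_chain (ho : IsOpen k X Y f) (hf : IsPWEmb k X Y f)
    (hX : IsCoalg k X) (hY : IsCoalg k Y) {T : Set X.carrier} (hT : T.Finite)
    (hchain : ∀ s ∈ T, ∀ t ∈ T, X.le s t ∨ X.le t s) {y : Y.carrier}
    (hy : ∀ t ∈ T, Y.le (f t) y) : ∃ x, (∀ t ∈ T, X.le t x) ∧ f x = y := by
  have hQ := hY.induce (Y.downset {y})
  have mapsTo : ∀ x : X.downset T, f x.1 ∈ Y.downset {y} := fun ⟨_, t, ht, hxt⟩ =>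
    ⟨y, rfl, hY.le_trans (hf.1.monotone hX hY hxt) (hy t ht)⟩
  obtain ⟨d, hd, hdi, hfd⟩ := ho (X.induce (X.downset T)) (Y.induce (Y.downset {y}))
    (hX.induce _) (hX.isPath_induce_downset hT hchain) hQ
    (hY.isPath_induce_downset (Set.finite_singleton y) (by simp [hY.le_refl]))
    (fun x => ⟨f x.1, mapsTo x⟩) Subtype.val Subtype.val
    ((hf.isEmb_downset hX hT hchain).codRestrict hY.mem_downset_of_le mapsTo)
    (isEmb_val hX.mem_downset_of_le) (isEmb_val hY.mem_downset_of_le) fun _ => rfl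
  refine ⟨d ⟨y, hY.mem_downset rfl⟩, fun t ht => ?_, hfd _⟩
  rw [← show d ⟨f t, _⟩ = t from hdi ⟨t, hX.mem_downset ht⟩]
  exact hd.monotone hQ hX (hy t ht)

theorem IsPWEmb.isHom_of_comp (hf : IsPWEmb k X Y f) (hX : IsCoalg k X) (hY : IsCoalg k Y)
    (hZ : IsCoalg k Z) {d : Z.carrier → X.carrier} (hfd : IsHom Z Y fun z => f (d z))
    (hchain : ∀ a b, X.le (d a) (d b) ∨ X.le (d b) (d a)) : IsHom Z X d := by
  obtain ⟨hhom, hrel, hieq⟩ := (isPWEmb_iff_reflects hX hY).1 hf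
  refine .of_height_eq hZ hX (fun r v h => hrel r _ (fun _ _ => hchain _ _) (hfd.1 r v h))
    (fun a b h => hieq _ _ (hchain a b) (hfd.2.1 a b h)) (fun a b hab => ?_)
    fun a => by rw [← hhom.height_eq hX hY, hfd.height_eq hZ hY]
  refine (hchain a b).elim id fun hba => ?_
  have map_eq : f (d a) = f (d b) :=
    hY.le_antisymm (hfd.monotone hZ hY hab) (hhom.monotone hX hY hba)
  rw [hhom.eq_of_comparable_of_map_eq hX hY (hchain a b) map_eq]
  exact hX.le_refl _

theorem IsPWEmb.isOpen_of_surjective (hf : IsPWEmb k X Y f) (hX : IsCoalg k X)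
    (hY : IsCoalg k Y) (hsurj : Function.Surjective f)
    (hlift : ∀ x y, Y.le (f x) y → ∃ x', X.le x x' ∧ f x' = y) : IsOpen k X Y f := by
  intro P Q hP hPpath hQ hQpath i m n _ hm hn hcomm
  obtain ⟨d, hfd, hchain, hdm⟩ : ∃ d : Q.carrier → X.carrier, (∀ q, f (d q) = n q) ∧
      (∀ a b, X.le (d a) (d b) ∨ X.le (d b) (d a)) ∧
      ∀ p, X.le (d (i p)) (m p) ∨ X.le (m p) (d (i p)) := by
    rcases isEmpty_or_nonempty Q.carrier with _ | _
    · exact ⟨isEmptyElim, isEmptyElim, isEmptyElim, fun p => isEmptyElim (i p)⟩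
    obtain ⟨top, htop⟩ := hQpath.exists_top hQ
    obtain ⟨x, hmx, hx⟩ : ∃ x, (∀ p, X.le (m p) x) ∧ f x = n top := by
      rcases isEmpty_or_nonempty P.carrier with _ | _
      · exact (hsurj (n top)).imp fun _ hx => ⟨isEmptyElim, hx⟩
      · obtain ⟨p, hp⟩ := hPpath.exists_top hP
        obtain ⟨x, hpx, hx⟩ := hlift (m p) (n top)
          (hcomm p ▸ hn.1.monotone hQ hY (htop (i p)))
        exact ⟨x, fun p' => hX.le_trans (hm.1.monotone hP hX (hp p')) hpx, hx⟩
    choose d hdx hfd using fun q => hf.1.exists_le_of_le_map hX hY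
      (hx ▸ hn.1.monotone hQ hY (htop q) : Y.le (n q) (f x))
    exact ⟨d, hfd, fun a b => hX.le_total_of_le (hdx a) (hdx b),
      fun p => hX.le_total_of_le (hdx (i p)) (hmx p)⟩
  have hnd : IsHom Q Y fun q => f (d q) := by simpa only [hfd] using hn.1
  exact ⟨d, hf.isHom_of_comp hX hY hQ hnd hchain,
    fun p => hf.1.eq_of_comparable_of_map_eq hX hY (hdm p) (by rw [hfd, hcomm]), hfd⟩

theorem IsPWEmb.isOpen_iff (hf : IsPWEmb k X Y f) (hX : IsCoalg k X) (hY : IsCoalg k Y) :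
    IsOpen k X Y f ↔
      Function.Surjective f ∧ ∀ x y, Y.le (f x) y → ∃ x', X.le x x' ∧ f x' = y := by
  refine ⟨fun ho => ⟨fun y => ?_, fun x y hxy => ?_⟩,
    fun ⟨hsurj, hlift⟩ => hf.isOpen_of_surjective hX hY hsurj hlift⟩
  · simpa using ho.exists_map_eq_above_chain hf hX hY Set.finite_empty (y := y) (by simp)
  · simpa using ho.exists_map_eq_above_chain hf hX hY (Set.finite_singleton x) (y := y)
      (by simp [hX.le_refl]) (by simpa using hxy)

end EObj

/-! ### Forests of lists -/

/-- `c` identifies the forest `X` with a prefix-closed set of non-empty lists of length at most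
`k`, ordered by prefix. -/
structure IsListForest {V : Vocab} {γ : Type} (k : ℕ) (X : EObj V) (c : X.carrier → List γ) :
    Prop where
  injective : Function.Injective c
  le_iff : ∀ x y, X.le x y ↔ c x <+: c y
  ne_nil : ∀ x, c x ≠ []
  length_le : ∀ x, (c x).length ≤ k
  exists_of_prefix : ∀ x l, l ≠ [] → l <+: c x → ∃ y, c y = l
  rel_comparable : ∀ r v, X.rel r v → ∀ i j, c (v i) <+: c (v j) ∨ c (v j) <+: c (v i)
  ieq_comparable : ∀ x y, X.ieq x y → c x <+: c y ∨ c y <+: c x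

namespace IsListForest

variable {V : Vocab} {γ : Type} {k : ℕ} {X : EObj V} {c : X.carrier → List γ}

theorem injOn_length (h : IsListForest k X c) (x : X.carrier) :
    Set.InjOn (fun y => (c y).length) {y | X.le y x} := by
  intro y hy z hz hyz
  have prefix_yz := List.prefix_of_prefix_length_le ((h.le_iff _ _).1 hy) ((h.le_iff _ _).1 hz)
    hyz.le
  exact h.injective (prefix_yz.eq_of_length hyz)

theorem image_length (h : IsListForest k X c) (x : X.carrier) :
    (fun y => (c y).length) '' {y | X.le y x} = Set.Icc 1 (c x).length := by
  ext n
  constructor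
  · rintro ⟨y, hy, rfl⟩
    exact ⟨List.length_pos_iff.2 (h.ne_nil y), ((h.le_iff y x).1 hy).length_le⟩
  · rintro ⟨hpos, hn⟩
    have length_take : ((c x).take n).length = n := List.length_take_of_le hn
    obtain ⟨y, hy⟩ := h.exists_of_prefix x ((c x).take n)
      (List.length_pos_iff.1 (by omega)) (List.take_prefix _ _)
    exact ⟨y, (h.le_iff y x).2 (hy ▸ List.take_prefix _ _), by simp only [hy, length_take]⟩

theorem height_eq (h : IsListForest k X c) (x : X.carrier) : X.height x = (c x).length := by
  rw [EObj.height, ← (h.injOn_length x).ncard_image, h.image_length, Set.ncard_Icc_nat]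
  omega

theorem isCoalg (h : IsListForest k X c) : EObj.IsCoalg k X := by
  refine ⟨fun x => (h.le_iff _ _).2 List.prefix_rfl, fun x y z => ?_, fun x y => ?_,
    fun x => ⟨?_, ?_, fun y z => ?_⟩, fun x y hxy => ?_⟩
  · simpa only [h.le_iff] using List.IsPrefix.trans
  · simpa only [h.le_iff] using
      fun hxy hyx => h.injective (hxy.eq_of_length_le hyx.length_le)
  · exact Set.Finite.of_finite_image (h.image_length x ▸ Set.finite_Icc _ _) (h.injOn_length x)
  · exact (h.height_eq x).trans_le ((h.length_le x).trans k.le_succ)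
  · simpa only [h.le_iff] using List.prefix_or_prefix_of_prefix
  · simp only [h.le_iff]
    rcases hxy.2 with ⟨r, v, hv, ⟨i, rfl⟩, j, rfl⟩ | hieq | hieq
    · exact h.rel_comparable r v hv i j
    · exact h.ieq_comparable _ _ hieq
    · exact (h.ieq_comparable _ _ hieq).symm

end IsListForest

namespace FE

variable {V : Vocab} {k : ℕ} {α : Type} {A : Str V α}

theorem isListForest (A : Str V α) :
    IsListForest k (FE V k A) fun x : (FE V k A).carrier => x.1 where
  injective := Subtype.val_injective
  le_iff _ _ := Iff.rfl
  ne_nil x := x.2.1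
  length_le x := x.2.2
  exists_of_prefix x l hl h := ⟨⟨l, hl, h.length_le.trans x.2.2⟩, rfl⟩
  rel_comparable _ _ h := h.1
  ieq_comparable _ _ h := h.1

theorem isCoalg (A : Str V α) : EObj.IsCoalg k (FE V k A) := (isListForest A).isCoalg

theorem length_map_eq_height {Z : EObj V} (hZ : EObj.IsCoalg k Z)
    {p : Z.carrier → (FE V k A).carrier} (hp : EObj.IsHom Z (FE V k A) p) (z : Z.carrier) :
    (p z).1.length = Z.height z :=
  ((isListForest A).height_eq (p z)).symm.trans (hp.height_eq hZ (isCoalg A) z)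

end FE

/-- The forest of non-empty lists in `S` of length at most `k`, where a list stands for the image
under `f` of its last entry. For `f = id` and no condition `S` this is `FE V k A`. -/
def seqForest {V : Vocab} {γ α : Type} (k : ℕ) (A : Str V α) (f : γ → α) (S : List γ → Prop) :
    EObj V where
  carrier := {l : List γ // l ≠ [] ∧ l.length ≤ k ∧ S l}
  rel r v :=
    (∀ i j, (v i).1 <+: (v j).1 ∨ (v j).1 <+: (v i).1) ∧
    A.rel r fun i => f ((v i).1.getLast (v i).2.1)
  ieq s t := (s.1 <+: t.1 ∨ t.1 <+: s.1) ∧ f (s.1.getLast s.2.1) = f (t.1.getLast t.2.1)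
  le s t := s.1 <+: t.1

namespace seqForest

variable {V : Vocab} {k : ℕ} {γ α : Type} (A : Str V α) (f : γ → α) {S : List γ → Prop}

theorem isListForest (hS : ∀ l l', l <+: l' → S l' → S l) :
    IsListForest k (seqForest k A f S) fun x : (seqForest k A f S).carrier => x.1 where
  injective := Subtype.val_injective
  le_iff _ _ := Iff.rfl
  ne_nil x := x.2.1
  length_le x := x.2.2.1
  exists_of_prefix x l hl h := ⟨⟨l, hl, h.length_le.trans x.2.2.1, hS _ _ h x.2.2.2⟩, rfl⟩
  rel_comparable _ _ h := h.1
  ieq_comparable _ _ h := h.1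

/-- The projection of `seqForest k A f S` to the cofree coalgebra, applying `f` entrywise. -/
def map (x : (seqForest k A f S).carrier) : (FE V k A).carrier :=
  ⟨x.1.map f, by simpa using x.2.1, by simpa using x.2.2.1⟩

theorem getLast_map (x : (seqForest k A f S).carrier) :
    (map A f x).1.getLast (map A f x).2.1 = f (x.1.getLast x.2.1) := by
  simp [map]

theorem isHom_map (hS : ∀ l l', l <+: l' → S l' → S l) :
    EObj.IsHom (seqForest k A f S) (FE V k A) (map A f) := by
  have hX := isListForest (k := k) A f hS
  refine .of_height_eq hX.isCoalg (FE.isCoalg A) (fun r v h => ?_) (fun x y h => ?_)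
    (fun _ _ h => List.IsPrefix.map f h) fun x => ?_
  · refine ⟨fun i j => (h.1 i j).imp (fun h => h.map f) (fun h => h.map f), ?_⟩
    simpa only [getLast_map] using h.2
  · refine ⟨h.1.imp (fun h => h.map f) (fun h => h.map f), ?_⟩
    simpa only [getLast_map] using h.2
  · rw [(FE.isListForest A).height_eq, hX.height_eq]
    exact List.length_map f

theorem isPWEmb_map (hS : ∀ l l', l <+: l' → S l' → S l) :
    EObj.IsPWEmb k (seqForest k A f S) (FE V k A) (map A f) := by
  refine (EObj.isPWEmb_iff_reflects (isListForest A f hS).isCoalg (FE.isCoalg A)).2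
    ⟨isHom_map A f hS, fun r v hv h => ⟨hv, ?_⟩, fun x y hxy h => ⟨hxy, ?_⟩⟩
  · simpa only [getLast_map] using h.2
  · simpa only [getLast_map] using h.2

theorem exists_append_map_eq
    (hext : ∀ l, S l → l.length < k → ∀ a, ∃ c, f c = a ∧ S (l ++ [c])) {s : List α}
    {l : List γ} (hl : S l) (hk : l.length + s.length ≤ k) :
    ∃ l', S (l ++ l') ∧ l'.map f = s := by
  induction s generalizing l with
  | nil => exact ⟨[], by simpa using hl, rfl⟩
  | cons a s ih =>
    rw [List.length_cons] at hk
    obtain ⟨c, rfl, hc⟩ := hext l hl (by omega) a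
    obtain ⟨l', hl', rfl⟩ := ih hc (by simp; omega)
    exact ⟨c :: l', by simpa using hl', rfl⟩

theorem isOpen_map (hS : ∀ l l', l <+: l' → S l' → S l) (hnil : S [])
    (hext : ∀ l, S l → l.length < k → ∀ a, ∃ c, f c = a ∧ S (l ++ [c])) :
    EObj.IsOpen k (seqForest k A f S) (FE V k A) (map A f) := by
  have exists_above : ∀ l, S l → ∀ y : (FE V k A).carrier, l.map f <+: y.1 →
      ∃ x : (seqForest k A f S).carrier, l <+: x.1 ∧ map A f x = y := by
    rintro l hl ⟨_, hne, hlen⟩ ⟨s, rfl⟩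
    obtain ⟨l', hl', rfl⟩ := exists_append_map_eq f hext hl (by simpa using hlen)
    exact ⟨⟨l ++ l', by simpa using hne, by simpa using hlen, hl'⟩, List.prefix_append _ _,
      Subtype.ext List.map_append⟩
  exact ((isPWEmb_map A f hS).isOpen_iff (isListForest A f hS).isCoalg (FE.isCoalg A)).2
    ⟨fun y => (exists_above [] hnil y List.nil_prefix).imp fun _ h => h.2,
      fun x y hxy => exists_above x.1 x.2.2.2 y hxy⟩

end seqForest

/-! ### Positive formulas of bounded rank -/

/-- Structures for `V` with `n` distinguished elements, the interpretations of formulas with free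
variables among `Fin n`. -/
abbrev PointedStr (V : Vocab) (n : ℕ) : Type 1 := Σ α : Type, Str V α × (Fin n → α)

namespace PFml

variable {V : Vocab} {m n : ℕ}

/-- The class of pointed structures defined by `φ`. Two formulas are logically equivalent if and
only if they have the same models, so finiteness up to equivalence is finiteness of an image. -/
def models (φ : PFml V n) : Set (PointedStr V n) := {x | φ.Sat x.2.1 x.2.2}

theorem models_mem_of_isSublattice {L : Set (Set (PointedStr V n))} (hL : IsSublattice L)
    (hrel : ∀ r v, (rel r v).models ∈ L) (heq : ∀ i j, (eq i j).models ∈ L)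
    (hex : ∀ φ : PFml V (n + 1), φ.qr < m → φ.ex.models ∈ L)
    (hall : ∀ φ : PFml V (n + 1), φ.qr < m → φ.all.models ∈ L) :
    ∀ φ : PFml V n, φ.qr ≤ m → φ.models ∈ L
  | .rel r v, _ => hrel r v
  | .eq i j, _ => heq i j
  | .and φ ψ, h => hL.infClosed
      (models_mem_of_isSublattice hL hrel heq hex hall φ ((le_max_left _ _).trans h))
      (models_mem_of_isSublattice hL hrel heq hex hall ψ ((le_max_right _ _).trans h))
  | .or φ ψ, h => hL.supClosed
      (models_mem_of_isSublattice hL hrel heq hex hall φ ((le_max_left _ _).trans h))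
      (models_mem_of_isSublattice hL hrel heq hex hall ψ ((le_max_right _ _).trans h))
  | .ex φ, h => hex φ h
  | .all φ, h => hall φ h

theorem finite_image_models [Finite V.Rel] (m n : ℕ) :
    (models '' {φ : PFml V n | φ.qr < m}).Finite := by
  induction m generalizing n with
  | zero => simp
  | succ m ih =>
    let lower : Set (Set (PointedStr V (n + 1))) := models '' {φ | φ.qr < m}
    let exClass (D : Set (PointedStr V (n + 1))) : Set (PointedStr V n) :=
      {x | ∃ a, ⟨x.1, x.2.1, Fin.snoc x.2.2 a⟩ ∈ D}
    let allClass (D : Set (PointedStr V (n + 1))) : Set (PointedStr V n) :=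
      {x | ∀ a, ⟨x.1, x.2.1, Fin.snoc x.2.2 a⟩ ∈ D}
    let atoms : Set (Set (PointedStr V n)) :=
      Set.range (fun a : Σ r : V.Rel, Fin (V.ar r) → Fin n => (rel a.1 a.2).models) ∪
        Set.range (fun a : Fin n × Fin n => (eq a.1 a.2).models)
    let generators := atoms ∪ (exClass '' lower ∪ allClass '' lower)
    have finite_generators : generators.Finite :=
      ((Set.finite_range _).union (Set.finite_range _)).union
        (((ih _).image _).union ((ih _).image _))
    refine finite_generators.latticeClosure.subset (Set.image_subset_iff.2 fun φ hφ => ?_)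
    exact models_mem_of_isSublattice isSublattice_latticeClosure
      (fun r v => subset_latticeClosure (.inl (.inl ⟨⟨r, v⟩, rfl⟩)))
      (fun i j => subset_latticeClosure (.inl (.inr ⟨(i, j), rfl⟩)))
      (fun ψ hψ => subset_latticeClosure (.inr (.inl ⟨_, ⟨ψ, hψ, rfl⟩, rfl⟩)))
      (fun ψ hψ => subset_latticeClosure (.inr (.inr ⟨_, ⟨ψ, hψ, rfl⟩, rfl⟩)))
      φ (Nat.lt_succ_iff.1 hφ)

theorem exists_sat_iff_forall [Finite V.Rel] {Γ : Set (PFml V n)} (hΓ : Γ.Nonempty)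
    (hqr : ∀ φ ∈ Γ, φ.qr ≤ m) :
    ∃ ψ : PFml V n, ψ.qr ≤ m ∧
      ∀ {α : Type} (M : Str V α) (e : Fin n → α), ψ.Sat M e ↔ ∀ φ ∈ Γ, φ.Sat M e := by
  have infClosed : InfClosed (models '' {φ : PFml V n | φ.qr < m + 1}) := by
    rintro _ ⟨φ, hφ, rfl⟩ _ ⟨ψ, hψ, rfl⟩
    exact ⟨φ.and ψ, Nat.max_lt.2 ⟨hφ, hψ⟩, rfl⟩
  have image_subset : models '' Γ ⊆ models '' {φ : PFml V n | φ.qr < m + 1} :=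
    Set.image_mono fun φ hφ => Nat.lt_succ_of_le (hqr φ hφ)
  obtain ⟨ψ, hψ, hmodels⟩ := infClosed.sInf_mem_of_nonempty
    ((finite_image_models _ _).subset image_subset) (hΓ.image _) image_subset
  refine ⟨ψ, Nat.lt_succ_iff.1 hψ, fun {α} M e => ?_⟩
  simpa [models] using Set.ext_iff.1 hmodels ⟨α, M, e⟩

theorem exists_sat_iff_exists [Finite V.Rel] {Γ : Set (PFml V n)} (hΓ : Γ.Nonempty)
    (hqr : ∀ φ ∈ Γ, φ.qr ≤ m) :
    ∃ ψ : PFml V n, ψ.qr ≤ m ∧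
      ∀ {α : Type} (M : Str V α) (e : Fin n → α), ψ.Sat M e ↔ ∃ φ ∈ Γ, φ.Sat M e := by
  have supClosed : SupClosed (models '' {φ : PFml V n | φ.qr < m + 1}) := by
    rintro _ ⟨φ, hφ, rfl⟩ _ ⟨ψ, hψ, rfl⟩
    exact ⟨φ.or ψ, Nat.max_lt.2 ⟨hφ, hψ⟩, rfl⟩
  have image_subset : models '' Γ ⊆ models '' {φ : PFml V n | φ.qr < m + 1} :=
    Set.image_mono fun φ hφ => Nat.lt_succ_of_le (hqr φ hφ)
  obtain ⟨ψ, hψ, hmodels⟩ := supClosed.sSup_mem_of_nonempty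
    ((finite_image_models _ _).subset image_subset) (hΓ.image _) image_subset
  refine ⟨ψ, Nat.lt_succ_iff.1 hψ, fun {α} M e => ?_⟩
  simpa [models] using Set.ext_iff.1 hmodels ⟨α, M, e⟩

end PFml

/-- Positive formulas of rank at most `m` are transferred from `(A, e)` to `(B, e')`. -/
def PreservesPos {V : Vocab} {α β : Type} {n : ℕ} (A : Str V α) (B : Str V β) (m : ℕ)
    (e : Fin n → α) (e' : Fin n → β) : Prop :=
  ∀ φ : PFml V n, φ.qr ≤ m → φ.Sat A e → φ.Sat B e'

namespace PreservesPos

variable {V : Vocab} {α β : Type} {A : Str V α} {B : Str V β} {m n : ℕ} {e : Fin n → α}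
  {e' : Fin n → β}

theorem forth [Finite V.Rel] (h : PreservesPos A B (m + 1) e e') (a : α) :
    ∃ b, PreservesPos A B m (Fin.snoc e a) (Fin.snoc e' b) := by
  obtain ⟨ψ, hψ, sat_iff⟩ := PFml.exists_sat_iff_forall
    (Γ := {φ : PFml V (n + 1) | φ.qr ≤ m ∧ φ.Sat A (Fin.snoc e a)})
    ⟨.eq 0 0, Nat.zero_le m, rfl⟩ fun _ hφ => hφ.1
  obtain ⟨b, hb⟩ : ∃ b, ψ.Sat B (Fin.snoc e' b) :=
    h ψ.ex (Nat.succ_le_succ hψ) ⟨a, (sat_iff A _).2 fun _ hφ => hφ.2⟩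
  exact ⟨b, fun φ hφ hA => (sat_iff B _).1 hb φ ⟨hφ, hA⟩⟩

/-- If no `a` works, the disjunction of the formulas of rank at most `m` false at `b` holds at
every `a`, so its universal closure is transferred to `B`, where `b` refutes it. -/
theorem back [Finite V.Rel] [Nonempty α] (h : PreservesPos A B (m + 1) e e') (b : β) :
    ∃ a, PreservesPos A B m (Fin.snoc e a) (Fin.snoc e' b) := by
  by_contra! hnone
  let Γ : Set (PFml V (n + 1)) := {φ | φ.qr ≤ m ∧ ¬ φ.Sat B (Fin.snoc e' b)}
  have exists_mem (a : α) : ∃ φ ∈ Γ, φ.Sat A (Fin.snoc e a) := by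
    have hnot := hnone a
    simp only [PreservesPos, not_forall] at hnot
    obtain ⟨φ, hφ, hA, hB⟩ := hnot
    exact ⟨φ, ⟨hφ, hB⟩, hA⟩
  obtain ⟨ψ, hψ, sat_iff⟩ := PFml.exists_sat_iff_exists (Γ := Γ)
    ((exists_mem (Classical.arbitrary α)).imp fun _ hφ => hφ.1) fun _ hφ => hφ.1
  obtain ⟨φ, hφ, hB⟩ := (sat_iff B _).1
    (h ψ.all (Nat.succ_le_succ hψ) (fun a => (sat_iff A _).2 (exists_mem a)) b)
  exact hφ.2 hB

end PreservesPos

/-! ### Back-and-forth systems -/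

/-- A winning strategy for Duplicator in the `k`-round game for positive logic from `A` to `B`,
given by the set `S` of plays it allows: at each round Spoiler picks an element of either
structure and Duplicator answers in the other one, and the pairs played form a relation that
preserves, but need not reflect, the relations and equality. -/
structure IsBackForth {V : Vocab} {α β : Type} (A : Str V α) (B : Str V β) (k : ℕ)
    (S : List (α × β) → Prop) : Prop where
  nil : S []
  of_prefix : ∀ l l', l <+: l' → S l' → S l
  forth : ∀ l, S l → l.length < k → ∀ a, ∃ b, S (l ++ [(a, b)])
  back : ∀ l, S l → l.length < k → ∀ b, ∃ a, S (l ++ [(a, b)])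
  rel : ∀ l, S l → ∀ r (v : Fin (V.ar r) → α × β), (∀ i, v i ∈ l) →
    A.rel r (fun i => (v i).1) → B.rel r fun i => (v i).2
  eq : ∀ l, S l → ∀ c ∈ l, ∀ d ∈ l, c.1 = d.1 → c.2 = d.2

section BackForth

variable {V : Vocab} {α β : Type} {A : Str V α} {B : Str V β} {k : ℕ}

theorem ofFn_snoc {γ : Type} {n : ℕ} (e : Fin n → γ) (c : γ) :
    List.ofFn (Fin.snoc e c : Fin (n + 1) → γ) = List.ofFn e ++ [c] := by
  rw [List.ofFn_succ_last]
  simp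

theorem IsBackForth.sat {S : List (α × β) → Prop} (hS : IsBackForth A B k S) {n : ℕ}
    (φ : PFml V n) (e : Fin n → α × β) (he : S (List.ofFn e)) (hk : n + φ.qr ≤ k)
    (hsat : φ.Sat A (Prod.fst ∘ e)) : φ.Sat B (Prod.snd ∘ e) := by
  induction φ with
  | rel r v => exact hS.rel _ he r (e ∘ v) (fun i => by simp) hsat
  | eq i j => exact hS.eq _ he (e i) (by simp) (e j) (by simp) hsat
  | and φ ψ ihφ ihψ =>
    simp only [PFml.qr] at hk
    exact ⟨ihφ e he (by omega) hsat.1, ihψ e he (by omega) hsat.2⟩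
  | or φ ψ ihφ ihψ =>
    simp only [PFml.qr] at hk
    exact hsat.imp (ihφ e he (by omega)) (ihψ e he (by omega))
  | ex φ ih =>
    simp only [PFml.qr] at hk
    obtain ⟨a, ha⟩ := hsat
    obtain ⟨b, hb⟩ := hS.forth _ he (by simp; omega) a
    have := ih (Fin.snoc e (a, b)) (by rwa [ofFn_snoc]) (by omega)
    simp only [Fin.comp_snoc] at this
    exact ⟨b, this ha⟩
  | all φ ih =>
    simp only [PFml.qr] at hk
    intro b
    obtain ⟨a, ha⟩ := hS.back _ he (by simp; omega) b
    have := ih (Fin.snoc e (a, b)) (by rwa [ofFn_snoc]) (by omega)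
    simp only [Fin.comp_snoc] at this
    exact this (hsat a)

/-- The plays whose positions after `n` rounds, for all `n`, transfer the positive formulas of
rank at most `k - n`; quantifying over the prefixes makes the set prefix-closed. -/
def PosPlay (A : Str V α) (B : Str V β) (k : ℕ) (l : List (α × β)) : Prop :=
  ∀ (n : ℕ) (e : Fin n → α × β), List.ofFn e <+: l →
    PreservesPos A B (k - n) (Prod.fst ∘ e) (Prod.snd ∘ e)

namespace PosPlay

variable {l : List (α × β)}

theorem preservesPos_get (hl : PosPlay A B k l) :
    PreservesPos A B (k - l.length) (Prod.fst ∘ l.get) (Prod.snd ∘ l.get) :=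
  hl _ _ (by simp)

theorem append_singleton (hl : PosPlay A B k l) {a : α} {b : β}
    (hab : PreservesPos A B (k - (l.length + 1)) (Fin.snoc (Prod.fst ∘ l.get) a)
      (Fin.snoc (Prod.snd ∘ l.get) b)) :
    PosPlay A B k (l ++ [(a, b)]) := by
  intro n e hprefix
  rcases List.prefix_concat_iff.1 hprefix with heq | hprefix
  · have ofFn_eq :
        List.ofFn e = List.ofFn (Fin.snoc l.get (a, b) : Fin (l.length + 1) → α × β) := by
      rw [heq, ofFn_snoc, List.ofFn_get]
    obtain ⟨rfl, heq⟩ := Sigma.mk.inj_iff.1 (List.ofFn_inj'.1 ofFn_eq)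
    rw [eq_of_heq heq, Fin.comp_snoc, Fin.comp_snoc]
    exact hab
  · exact hl n e hprefix

end PosPlay

theorem isBackForth_posPlay [Finite V.Rel] [Nonempty α] {e : Fin 0 → α} {e' : Fin 0 → β}
    (h : PreservesPos A B k e e') : IsBackForth A B k (PosPlay A B k) where
  nil n e₀ hprefix := by
    obtain rfl : n = 0 := by simpa using hprefix
    rwa [Subsingleton.elim (Prod.fst ∘ e₀) e, Subsingleton.elim (Prod.snd ∘ e₀) e']
  of_prefix l l' hprefix hl' n e he := hl' n e (he.trans hprefix)
  forth l hl hk a := by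
    have hpos := hl.preservesPos_get
    rw [show k - l.length = k - (l.length + 1) + 1 by omega] at hpos
    exact (hpos.forth a).imp fun b => hl.append_singleton
  back l hl hk b := by
    have hpos := hl.preservesPos_get
    rw [show k - l.length = k - (l.length + 1) + 1 by omega] at hpos
    exact (hpos.back b).imp fun a => hl.append_singleton
  rel l hl r v hv hA := by
    choose i hi using fun j => List.mem_iff_get.1 (hv j)
    simp only [← hi] at hA ⊢
    exact hl.preservesPos_get (.rel r i) (Nat.zero_le _) hA
  eq l hl c hc d hd hA := by
    obtain ⟨i, rfl⟩ := List.mem_iff_get.1 hc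
    obtain ⟨j, rfl⟩ := List.mem_iff_get.1 hd
    exact hl.preservesPos_get (.eq i j) (Nat.zero_le _) hA

theorem preservesPos_iff_exists_isBackForth [Finite V.Rel] [Nonempty α] {e : Fin 0 → α}
    {e' : Fin 0 → β} : PreservesPos A B k e e' ↔ ∃ S, IsBackForth A B k S := by
  refine ⟨fun h => ⟨_, isBackForth_posPlay h⟩, fun ⟨S, hS⟩ φ hφ hsat => ?_⟩
  rw [Subsingleton.elim e' (Prod.snd ∘ Fin.elim0)]
  refine hS.sat φ Fin.elim0 hS.nil (by omega) ?_
  rwa [Subsingleton.elim (Prod.fst ∘ Fin.elim0) e]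

end BackForth

/-! ### Spans -/

/-- Half of the span condition: an open pathwise embedding to `F_k^I(A)` and a bijection followed
by an open pathwise embedding to `F_k^I(B)` with a common source. -/
def HasBijOpenSpan {V : Vocab} {α β : Type} (A : Str V α) (B : Str V β) (k : ℕ) : Prop :=
  ∃ Z : EObj V, EObj.IsCoalg k Z ∧
    ∃ (p : Z.carrier → (FE V k A).carrier) (q : Z.carrier → (FE V k B).carrier),
      EObj.IsPWEmb k Z (FE V k A) p ∧ EObj.IsOpen k Z (FE V k A) p ∧ BijThenOpenE V k Z (FE V k B) q

namespace IsBackForth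

variable {V : Vocab} {α β : Type} {A : Str V α} {B : Str V β} {k : ℕ} {S : List (α × β) → Prop}

theorem isHom_id (hS : IsBackForth A B k S) :
    EObj.IsHom (seqForest k A Prod.fst S) (seqForest k B Prod.snd S) id := by
  have hZ := seqForest.isListForest (k := k) A Prod.fst hS.of_prefix
  have hW := seqForest.isListForest (k := k) B Prod.snd hS.of_prefix
  refine .of_height_eq hZ.isCoalg hW.isCoalg (fun r v h => ⟨h.1, ?_⟩) (fun x y h => ⟨h.1, ?_⟩)
    (fun _ _ h => h) fun x => (hW.height_eq x).trans (hZ.height_eq x).symm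
  · obtain ⟨l, hl, hprefix⟩ : ∃ l, S l ∧ ∀ i, (v i).1 <+: l := by
      rcases isEmpty_or_nonempty (Fin (V.ar r)) with _ | _
      · exact ⟨[], hS.nil, isEmptyElim⟩
      · obtain ⟨i, hi⟩ := Finite.exists_max fun i => (v i).1.length
        exact ⟨(v i).1, (v i).2.2.2, fun j => (h.1 j i).elim id fun hij =>
          (hij.eq_of_length_le (hi j)) ▸ List.prefix_rfl⟩
    exact hS.rel l hl r _ (fun i => (hprefix i).subset (List.getLast_mem _)) h.2
  · rcases h.1 with hxy | hyx
    · exact hS.eq y.1 y.2.2.2 _ (hxy.subset (List.getLast_mem _)) _ (List.getLast_mem _) h.2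
    · exact hS.eq x.1 x.2.2.2 _ (List.getLast_mem _) _ (hyx.subset (List.getLast_mem _)) h.2

theorem hasBijOpenSpan (hS : IsBackForth A B k S) : HasBijOpenSpan A B k := by
  refine ⟨seqForest k A Prod.fst S, (seqForest.isListForest A _ hS.of_prefix).isCoalg,
    seqForest.map A Prod.fst, seqForest.map B Prod.snd, seqForest.isPWEmb_map A _ hS.of_prefix,
    seqForest.isOpen_map A _ hS.of_prefix hS.nil fun l hl hk a => ?_,
    seqForest k B Prod.snd S, (seqForest.isListForest B _ hS.of_prefix).isCoalg, id,
    seqForest.map B Prod.snd, hS.isHom_id, Function.bijective_id,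
    seqForest.isPWEmb_map B _ hS.of_prefix,
    seqForest.isOpen_map B _ hS.of_prefix hS.nil fun l hl hk b => ?_, fun _ => rfl⟩
  · obtain ⟨b, hb⟩ := hS.forth l hl hk a
    exact ⟨(a, b), rfl, hb⟩
  · obtain ⟨a, ha⟩ := hS.back l hl hk b
    exact ⟨(a, b), rfl, ha⟩

end IsBackForth

namespace BijThenOpenE

variable {V : Vocab} {k : ℕ} {Z Y : EObj V} {q : Z.carrier → Y.carrier}

theorem isHom (hq : BijThenOpenE V k Z Y q) : EObj.IsHom Z Y q := by
  obtain ⟨W, -, u, v, hu, -, hv, -, hquv⟩ := hq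
  rw [funext hquv]
  exact hv.1.comp hu

theorem surjective_and_lifts (hq : BijThenOpenE V k Z Y q) (hZ : EObj.IsCoalg k Z)
    (hY : EObj.IsCoalg k Y) :
    Function.Surjective q ∧ ∀ z y, Y.le (q z) y → ∃ z', Z.le z z' ∧ q z' = y := by
  obtain ⟨W, hW, u, v, hu, hbij, hv, hvo, hquv⟩ := hq
  obtain ⟨hsurj, hlift⟩ := (hv.isOpen_iff hW hY).1 hvo
  obtain rfl : q = v ∘ u := funext hquv
  refine ⟨hsurj.comp hbij.2, fun z y hzy => ?_⟩
  obtain ⟨w, hw, rfl⟩ := hlift (u z) y hzy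
  obtain ⟨z', rfl⟩ := hbij.2 w
  exact ⟨z', hu.le_of_map_le_of_injective hZ hW hbij.1 hw, rfl⟩

end BijThenOpenE

/-- The pair of lists `(s, t)` is the image of a node of `Z`, or of the missing root, under the
span `(p, q)`. -/
def Realized {V : Vocab} {α β : Type} {A : Str V α} {B : Str V β} {k : ℕ} {Z : EObj V}
    (p : Z.carrier → (FE V k A).carrier) (q : Z.carrier → (FE V k B).carrier)
    (s : List α) (t : List β) : Prop :=
  (s = [] ∧ t = []) ∨ ∃ z, (p z).1 = s ∧ (q z).1 = t

section Realized

variable {V : Vocab} {α β : Type} {A : Str V α} {B : Str V β} {k : ℕ} {Z : EObj V}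
  {p : Z.carrier → (FE V k A).carrier} {q : Z.carrier → (FE V k B).carrier}

theorem Realized.symm {s : List α} {t : List β} (h : Realized p q s t) : Realized q p t s :=
  h.imp And.symm fun ⟨z, hs, ht⟩ => ⟨z, ht, hs⟩

theorem eq_append_singleton {γ : Type} {s t : List γ} (hst : s <+: t)
    (hlen : t.length = s.length + 1) : ∃ c, t = s ++ [c] := by
  obtain ⟨u, rfl⟩ := hst
  obtain ⟨c, rfl⟩ := List.length_eq_one_iff.1 (by simpa using hlen : u.length = 1)
  exact ⟨c, rfl⟩

theorem Realized.exists_append (hZ : EObj.IsCoalg k Z) (hp : EObj.IsHom Z (FE V k A) p)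
    (hq : EObj.IsHom Z (FE V k B) q) (hsurj : Function.Surjective p)
    (hlift : ∀ z y, (FE V k A).le (p z) y → ∃ z', Z.le z z' ∧ p z' = y)
    {s : List α} {t : List β} (h : Realized p q s t) (hk : s.length < k) (a : α) :
    ∃ b, Realized p q (s ++ [a]) (t ++ [b]) := by
  let y : (FE V k A).carrier := ⟨s ++ [a], by simp, by simpa using hk⟩
  obtain ⟨z, hz, hprefix, hlen⟩ : ∃ z, p z = y ∧ t <+: (q z).1 ∧ t.length = s.length := by
    rcases h with ⟨rfl, rfl⟩ | ⟨z, rfl, rfl⟩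
    · exact (hsurj y).imp fun z hz => ⟨hz, List.nil_prefix, rfl⟩
    · obtain ⟨z', hzz', hz'⟩ := hlift z y (List.prefix_append _ _)
      exact ⟨z', hz', hq.monotone hZ (FE.isCoalg B) hzz', by
        rw [FE.length_map_eq_height hZ hp, FE.length_map_eq_height hZ hq]⟩
  obtain ⟨b, hb⟩ := eq_append_singleton hprefix (by
    rw [FE.length_map_eq_height hZ hq, ← FE.length_map_eq_height hZ hp, hz, hlen]
    simp [y])
  exact ⟨b, .inr ⟨z, by rw [hz], hb⟩⟩

/-- Both lists have the length of the node, so a truncation of the pair is the image of one node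
below it. -/
theorem exists_le_map_eq_of_prefix (hZ : EObj.IsCoalg k Z) (hp : EObj.IsHom Z (FE V k A) p)
    (hq : EObj.IsHom Z (FE V k B) q) {z : Z.carrier} {l l' : List (α × β)} (hl' : l' ≠ [])
    (hprefix : l' <+: l) (hpz : (p z).1 = l.map Prod.fst) (hqz : (q z).1 = l.map Prod.snd) :
    ∃ y, Z.le y z ∧ (p y).1 = l'.map Prod.fst ∧ (q y).1 = l'.map Prod.snd := by
  obtain ⟨y, hyz, hpy⟩ := hp.exists_le_of_le_map hZ (FE.isCoalg A) (x := z)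
    (y := ⟨l'.map Prod.fst, by simpa using hl', by
      simpa using hprefix.length_le.trans (by simpa [hpz] using (p z).2.2)⟩)
    (hpz ▸ hprefix.map Prod.fst)
  have hqy : (q y).1 <+: l.map Prod.snd := hqz ▸ hq.monotone hZ (FE.isCoalg B) hyz
  have hlen : (q y).1.length = (l'.map Prod.snd).length := by
    rw [FE.length_map_eq_height hZ hq, ← FE.length_map_eq_height hZ hp, hpy]
    simp
  exact ⟨y, hyz, congrArg Subtype.val hpy,
    (List.prefix_of_prefix_length_le hqy (hprefix.map _) hlen.le).eq_of_length hlen⟩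

theorem Realized.exists_chain (hZ : EObj.IsCoalg k Z) (hp : EObj.IsHom Z (FE V k A) p)
    (hq : EObj.IsHom Z (FE V k B) q) {l : List (α × β)}
    (h : Realized p q (l.map Prod.fst) (l.map Prod.snd)) :
    ∃ T : Set Z.carrier, (∀ x ∈ T, ∀ y ∈ T, Z.le x y ∨ Z.le y x) ∧
      ∀ c ∈ l, ∃ y ∈ T, (p y).1.getLast (p y).2.1 = c.1 ∧ (q y).1.getLast (q y).2.1 = c.2 := by
  rcases h with h | ⟨z, hpz, hqz⟩
  · obtain rfl : l = [] := by simpa using h.1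
    exact ⟨∅, by simp, by simp⟩
  refine ⟨{y | Z.le y z}, fun x hx y hy => hZ.le_total_of_le hx hy, fun c hc => ?_⟩
  obtain ⟨s, t, rfl⟩ := List.append_of_mem hc
  obtain ⟨y, hyz, hpy, hqy⟩ := exists_le_map_eq_of_prefix hZ hp hq (l' := s ++ [c]) (by simp)
    (by simp) hpz hqz
  exact ⟨y, hyz, by simp [hpy], by simp [hqy]⟩

theorem isBackForth_realized (hZ : EObj.IsCoalg k Z) (hp : EObj.IsPWEmb k Z (FE V k A) p)
    (hpo : EObj.IsOpen k Z (FE V k A) p) (hq : BijThenOpenE V k Z (FE V k B) q) :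
    IsBackForth A B k fun l => Realized p q (l.map Prod.fst) (l.map Prod.snd) := by
  obtain ⟨hphom, hprel, hpieq⟩ := (EObj.isPWEmb_iff_reflects hZ (FE.isCoalg A)).1 hp
  refine ⟨.inl ⟨rfl, rfl⟩, fun l' l hprefix h => ?_, fun l h hk a => ?_, fun l h hk b => ?_,
    fun l h r v hv hA => ?_, fun l h c hc d hd hA => ?_⟩
  · rcases eq_or_ne l' [] with rfl | hl'
    · exact .inl ⟨rfl, rfl⟩
    rcases h with h | ⟨z, hpz, hqz⟩
    · obtain rfl : l = [] := by simpa using h.1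
      exact absurd (List.prefix_nil.1 hprefix) hl'
    · obtain ⟨y, -, hy⟩ := exists_le_map_eq_of_prefix hZ hphom hq.isHom hl' hprefix hpz hqz
      exact .inr ⟨y, hy⟩
  · obtain ⟨hsurj, hlift⟩ := (hp.isOpen_iff hZ (FE.isCoalg A)).1 hpo
    simpa using h.exists_append hZ hphom hq.isHom hsurj hlift (by simpa using hk) a
  · obtain ⟨hsurj, hlift⟩ := hq.surjective_and_lifts hZ (FE.isCoalg B)
    obtain ⟨a, ha⟩ := h.symm.exists_append hZ hq.isHom hphom hsurj hlift (by simpa using hk) b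
    exact ⟨a, by simpa using ha.symm⟩
  · obtain ⟨T, hchain, hT⟩ := h.exists_chain hZ hphom hq.isHom
    choose y hyT hpy hqy using fun i => hT _ (hv i)
    have hrel := hprel r y (fun i j => hchain _ (hyT i) _ (hyT j))
      ⟨fun i j => hphom.comparable hZ (FE.isCoalg A) (hchain _ (hyT i) _ (hyT j)),
        by simpa only [hpy] using hA⟩
    simpa only [hqy] using (hq.isHom.1 r y hrel).2
  · obtain ⟨T, hchain, hT⟩ := h.exists_chain hZ hphom hq.isHom
    obtain ⟨x, hx, hpx, hqx⟩ := hT c hc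
    obtain ⟨y, hy, hpy, hqy⟩ := hT d hd
    have hieq := hpieq x y (hchain x hx y hy)
      ⟨hphom.comparable hZ (FE.isCoalg A) (hchain x hx y hy), by rw [hpx, hpy, hA]⟩
    simpa only [hqx, hqy] using (hq.isHom.2.1 x y hieq).2

end Realized

theorem exists_isBackForth_iff_hasBijOpenSpan {V : Vocab} {α β : Type} {A : Str V α}
    {B : Str V β} {k : ℕ} : (∃ S, IsBackForth A B k S) ↔ HasBijOpenSpan A B k :=
  ⟨fun ⟨_, hS⟩ => hS.hasBijOpenSpan,
    fun ⟨_, hZ, _, _, hp, hpo, hq⟩ => ⟨_, isBackForth_realized hZ hp hpo hq⟩⟩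

theorem preservesPos_iff_hasBijOpenSpan {V : Vocab} [Finite V.Rel] {α β : Type} [Nonempty α]
    {A : Str V α} {B : Str V β} {k : ℕ} {e : Fin 0 → α} {e' : Fin 0 → β} :
    PreservesPos A B k e e' ↔ HasBijOpenSpan A B k :=
  preservesPos_iff_exists_isBackForth.trans exists_isBackForth_iff_hasBijOpenSpan

/-- `A` and `B` satisfy the same sentences of `⁺FO_k` if, and only if,
there are objects `Z, Z′` of `EM(E_k^I)` and morphisms `p : Z → F_k^I(A)`,
`q : Z → F_k^I(B)`, `p′ : Z′ → F_k^I(B)`, `q′ : Z′ → F_k^I(A)` such that `p, p′` are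
open pathwise embeddings and `q, q′` are compositions of a bijection followed by an
open pathwise embedding. -/
theorem positive_FO_equivalence_iff_spans
    (V : Vocab) [Finite V.Rel] (har : ∀ r : V.Rel, V.ar r ≠ 0)
    {α β : Type} [Nonempty α] [Nonempty β] (A : Str V α) (B : Str V β) (k : ℕ) :
    (∀ φ : PFml V 0, φ.qr ≤ k →
        (φ.Sat A (fun i => i.elim0) ↔ φ.Sat B (fun i => i.elim0))) ↔
      ∃ Z Z' : EObj V, EObj.IsCoalg k Z ∧ EObj.IsCoalg k Z' ∧
        ∃ (p : Z.carrier → (FE V k A).carrier) (q : Z.carrier → (FE V k B).carrier)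
          (p' : Z'.carrier → (FE V k B).carrier) (q' : Z'.carrier → (FE V k A).carrier),
          EObj.IsPWEmb k Z (FE V k A) p ∧ EObj.IsOpen k Z (FE V k A) p ∧
          BijThenOpenE V k Z (FE V k B) q ∧
          EObj.IsPWEmb k Z' (FE V k B) p' ∧ EObj.IsOpen k Z' (FE V k B) p' ∧
          BijThenOpenE V k Z' (FE V k A) q' := by
  calc
    _ ↔ PreservesPos A B k (fun i : Fin 0 => i.elim0) (fun i : Fin 0 => i.elim0) ∧
        PreservesPos B A k (fun i : Fin 0 => i.elim0) (fun i : Fin 0 => i.elim0) :=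
      ⟨fun h => ⟨fun φ hφ => (h φ hφ).1, fun φ hφ => (h φ hφ).2⟩,
        fun h φ hφ => ⟨h.1 φ hφ, h.2 φ hφ⟩⟩
    _ ↔ HasBijOpenSpan A B k ∧ HasBijOpenSpan B A k :=
      and_congr preservesPos_iff_hasBijOpenSpan preservesPos_iff_hasBijOpenSpan
    _ ↔ _ := by
      constructor
      · rintro ⟨⟨Z, hZ, p, q, hp, hpo, hq⟩, Z', hZ', p', q', hp', hpo', hq'⟩
        exact ⟨Z, Z', hZ, hZ', p, q, p', q', hp, hpo, hq, hp', hpo', hq'⟩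
      · rintro ⟨Z, Z', hZ, hZ', p, q, p', q', hp, hpo, hq, hp', hpo', hq'⟩
        exact ⟨⟨Z, hZ, p, q, hp, hpo, hq⟩, Z', hZ', p', q', hp', hpo', hq'⟩
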